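/- Let a₁, …, a_{n−1} ∈ K and f(x) = ∑_{i=1}^{n−1} a_i·x^(σ^i). For x ∈ K let M_x be the σ-Dickson matrix of the coefficient list b₀ = −f(x), b_i = a_i·x^(σ^i) for 1 ≤ i ≤ n−1. Then the following are equivalent: (i) f is scattered; (ii) for every nonzero x ∈ K there exist row and column indices r, c such that the (n−1)-order minor of M_x obtained by deleting row r and column c is nonzero; (iii) for every nonzero x ∈ K and for all row and column indices r, c, the (n−1)-order minor of M_x obtained by deleting row r and column c is nonzero. -/

import Mathlib

/-!
Write `θ` for the automorphism `x ↦ x ^ (q ^ s)` of `K`. It has order `n`, and its fixed points are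
the `c` with `c ^ q = c`, because `s` is coprime to `n`. For nonzero `x` let
`L y = f (x * y) - y * f x = ∑ i, b i * θ ^ i y`, where `b` is the coefficient list of `M x`.
Then `f` is scattered iff, for every `x ≠ 0`, each `y` with `L y = 0` is fixed by `θ`. Moreover
`M x` sends the vector `(θ ^ c y)_c` to `(θ ^ r (L y))_r` (`dickson_mulVec_orbit`), so the constant
vector `1` lies in its kernel.

If `L y = 0` and `θ y ≠ y`, the kernel of `M x` contains the two independent vectors `1` and
`(θ ^ c y)_c`, hence a nonzero vector vanishing at any prescribed coordinate, and all minors of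
order `n - 1` vanish (`fixed_of_minor_ne_zero`).

Conversely, suppose all zeros of `L` are fixed by `θ`. Since `M x` commutes with the semilinear
cyclic shifts `v ↦ (θ ^ j (v (c - j)))_c` (`dickson_mulVec_shift`), Galois descent applies: for `v`
in the kernel and `α` in `K`, the sum of all shifts of `α v` is of the form `(θ ^ c t)_c`, so `t` is
a zero of `L` and thus fixed. Independence of the characters `θ ^ j`, applied to `t` as a function
of `α`, shows that `v` is constant (`const_of_mulVec_eq_zero`). If the minor at `(r, c)` were zero,
there would be `w ≠ 0` with `w c = 0` and `M x w` supported at `r`. If `M x w ≠ 0`, its shifts would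
give multiples of every basis vector in the image of the singular matrix `M x`, which is absurd; so
`M x w = 0`, and `w` is constant, hence zero (`minor_ne_zero`).
-/

/-! ### Dickson matrices and their kernels -/

/-- The Dickson matrix of the coefficients `b` for the endomorphism `θ`. The index `c - r` is
subtraction in `Fin (m + 1)`, that is, modulo `m + 1`. -/
def dickson {K : Type*} [Field K] {m : ℕ} (θ : K →+* K) (b : Fin (m + 1) → K) :
    Matrix (Fin (m + 1)) (Fin (m + 1)) K :=
  fun r c => (θ ^ (r : ℕ)) (b (c - r))

section dickson

variable {K : Type*} [Field K] {m : ℕ} {θ : K →+* K} {b : Fin (m + 1) → K}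

lemma pow_add_apply (θ : K →+* K) (i j : ℕ) (x : K) :
    (θ ^ (i + j)) x = (θ ^ i) ((θ ^ j) x) := by
  rw [pow_add]; rfl

lemma pow_add_val (hθ : θ ^ (m + 1) = 1) (i j : Fin (m + 1)) (x : K) :
    (θ ^ ((i + j : Fin (m + 1)) : ℕ)) x = (θ ^ (i : ℕ)) ((θ ^ (j : ℕ)) x) := by
  rw [Fin.val_add, ← pow_add_apply]
  congr 1
  conv_rhs => rw [← Nat.mod_add_div ((i : ℕ) + j) (m + 1), pow_add, pow_mul, hθ, one_pow, mul_one]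

/-- The Dickson matrix commutes with the semilinear cyclic shifts. -/
lemma dickson_mulVec_shift (hθ : θ ^ (m + 1) = 1) (v : Fin (m + 1) → K) (j r : Fin (m + 1)) :
    (dickson θ b).mulVec (fun c => (θ ^ (j : ℕ)) (v (c - j))) r =
      (θ ^ (j : ℕ)) ((dickson θ b).mulVec v (r - j)) := by
  simp only [Matrix.mulVec, dotProduct, dickson, map_sum, map_mul]
  rw [← Equiv.sum_comp (Equiv.addRight j)]
  refine Finset.sum_congr rfl fun c _ => ?_
  simp only [Equiv.coe_addRight, add_sub_cancel_right]
  rw [← pow_add_val hθ, add_sub_cancel, sub_sub_eq_add_sub]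

lemma dickson_mulVec_orbit (hθ : θ ^ (m + 1) = 1) (y : K) (r : Fin (m + 1)) :
    (dickson θ b).mulVec (fun c => (θ ^ (c : ℕ)) y) r =
      (θ ^ (r : ℕ)) (∑ i, b i * (θ ^ (i : ℕ)) y) := by
  simp only [Matrix.mulVec, dotProduct, dickson, map_sum, map_mul]
  rw [← Equiv.sum_comp (Equiv.addLeft r)]
  refine Finset.sum_congr rfl fun c _ => ?_
  simp only [Equiv.coe_addLeft, add_sub_cancel_left]
  rw [← pow_add_val hθ]

/-- Independence of characters for the powers of `θ`. -/
lemma coeff_eq_zero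
    (hinj : Function.Injective fun j : Fin (m + 1) => θ ^ (j : ℕ)) (d : Fin (m + 1) → K)
    (h : ∀ α : K, ∑ j, d j * (θ ^ (j : ℕ)) α = 0) (j : Fin (m + 1)) : d j = 0 := by
  have hli := linearIndependent_monoidHom K K
  have hli' := hli.comp (fun j : Fin (m + 1) => ((θ ^ (j : ℕ) : K →+* K) : K →* K)) (by
    intro i j hij
    apply hinj
    ext x
    exact DFunLike.congr_fun hij x)
  rw [Fintype.linearIndependent_iff] at hli'
  refine hli' d ?_ j
  ext α
  simpa using h α

/-- Galois descent: if the zeros of `y ↦ ∑ i, b i * θ ^ i y` are all fixed by `θ`, then the kernel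
of the Dickson matrix consists of constant vectors. -/
lemma const_of_mulVec_eq_zero (hθ : θ ^ (m + 1) = 1)
    (hinj : Function.Injective fun j : Fin (m + 1) => θ ^ (j : ℕ))
    (hker : ∀ y : K, ∑ i, b i * (θ ^ (i : ℕ)) y = 0 → θ y = y)
    (v : Fin (m + 1) → K) (hv : (dickson θ b).mulVec v = 0) (e e' : Fin (m + 1)) :
    v e = v e' := by
  let t : K → K := fun α => ∑ j : Fin (m + 1), (θ ^ (j : ℕ)) (α * v (-j))
  have hshift : ∀ (α : K) (c : Fin (m + 1)), (θ ^ (c : ℕ)) (t α) =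
      ∑ j : Fin (m + 1), (θ ^ (j : ℕ)) (α * v (c - j)) := by
    intro α c
    simp only [t, map_sum]
    rw [← Equiv.sum_comp (Equiv.addLeft c) fun j : Fin (m + 1) => (θ ^ (j : ℕ)) (α * v (c - j))]
    refine Finset.sum_congr rfl fun j _ => ?_
    simp only [Equiv.coe_addLeft]
    rw [pow_add_val hθ, sub_add_cancel_left]
  have hfix : ∀ α, θ (t α) = t α := by
    intro α
    apply hker
    have h := dickson_mulVec_orbit (b := b) hθ (t α) 0
    simp only [Fin.val_zero, pow_zero, RingHom.one_def, RingHom.id_apply] at h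
    rw [← h]
    have hsum : (fun c : Fin (m + 1) => (θ ^ (c : ℕ)) (t α)) =
        ∑ j : Fin (m + 1), fun c => (θ ^ (j : ℕ)) ((α • v) (c - j)) := by
      ext c
      simp [hshift α c]
    rw [hsum, Matrix.mulVec_sum, Finset.sum_apply]
    refine Finset.sum_eq_zero fun j _ => ?_
    rw [dickson_mulVec_shift hθ, Matrix.mulVec_smul, hv]
    simp
  have hfix' : ∀ α (k : ℕ), (θ ^ k) (t α) = t α := by
    intro α k
    induction k with
    | zero => simp
    | succ k ih => rw [pow_add_apply, pow_one, hfix, ih]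
  have key : ∀ c : Fin (m + 1), v c = v 0 := by
    intro c
    have h := coeff_eq_zero hinj
      (fun j => (θ ^ (j : ℕ)) (v (c - j)) - (θ ^ (j : ℕ)) (v (-j))) (by
        intro α
        have h1 := (hshift α c).symm.trans (hfix' α c)
        simp only [t, map_mul] at h1
        simp only [sub_mul, Finset.sum_sub_distrib]
        rw [sub_eq_zero]
        simpa only [mul_comm] using h1) 0
    simpa [sub_eq_zero] using h
  rw [key e, key e']

end dickson

/-! ### Minors -/

/-- A minor of order `m` vanishes iff some nonzero vector has zero coordinate at the deleted column
and is sent to a vector supported at the deleted row. -/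
lemma minor_eq_zero_iff {K : Type*} [Field K] {m : ℕ}
    (A : Matrix (Fin (m + 1)) (Fin (m + 1)) K) (r c : Fin (m + 1)) :
    (Matrix.of fun i j : Fin m => A (r.succAbove i) (c.succAbove j)).det = 0 ↔
      ∃ w : Fin (m + 1) → K, w ≠ 0 ∧ w c = 0 ∧ ∀ i, i ≠ r → A.mulVec w i = 0 := by
  rw [← Matrix.exists_mulVec_eq_zero_iff]
  constructor
  · rintro ⟨w, hw, h⟩
    refine ⟨c.insertNth 0 w, ?_, by simp, ?_⟩
    · intro h0
      apply hw
      ext j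
      simpa using congrFun h0 (c.succAbove j)
    · intro i hi
      obtain ⟨i, rfl⟩ := Fin.exists_succAbove_eq hi
      simpa [Matrix.mulVec, dotProduct, Fin.sum_univ_succAbove _ c] using congrFun h i
  · rintro ⟨w, hw, hc, h⟩
    refine ⟨fun j => w (c.succAbove j), ?_, ?_⟩
    · intro h0
      apply hw
      ext j
      by_cases hj : j = c
      · rw [hj, hc]; rfl
      · obtain ⟨j, rfl⟩ := Fin.exists_succAbove_eq hj
        exact congrFun h0 j
    · ext i
      have := h (r.succAbove i) (Fin.succAbove_ne r i)
      simpa [Matrix.mulVec, dotProduct, Fin.sum_univ_succAbove _ c, hc] using this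

section dickson

variable {K : Type*} [Field K] {m : ℕ} {θ : K →+* K} {b : Fin (m + 1) → K}

lemma mulVec_one_eq_zero (hθ : θ ^ (m + 1) = 1) (hb : ∑ i, b i = 0) :
    (dickson θ b).mulVec (fun _ => 1) = 0 := by
  ext r
  have := dickson_mulVec_orbit (b := b) hθ 1 r
  simpa [hb] using this

lemma minor_ne_zero (hθ : θ ^ (m + 1) = 1)
    (hinj : Function.Injective fun j : Fin (m + 1) => θ ^ (j : ℕ)) (hb : ∑ i, b i = 0)
    (hker : ∀ y : K, ∑ i, b i * (θ ^ (i : ℕ)) y = 0 → θ y = y) (r c : Fin (m + 1)) :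
    (Matrix.of fun i j : Fin m => dickson θ b (r.succAbove i) (c.succAbove j)).det ≠ 0 := by
  intro hdet
  obtain ⟨w, hw, hc, h⟩ := (minor_eq_zero_iff _ r c).1 hdet
  have h1 := mulVec_one_eq_zero hθ hb
  have hdet0 : (dickson θ b).det = 0 :=
    Matrix.exists_mulVec_eq_zero_iff.1 ⟨_, fun h0 => one_ne_zero (congrFun h0 0), h1⟩
  obtain ⟨u, hu, huM⟩ := Matrix.exists_vecMul_eq_zero_iff.2 hdet0
  obtain ⟨r', hr'⟩ := Function.ne_iff.1 hu
  -- Pair a left kernel vector `u`, nonzero at `r'`, with the shift of `w` whose image is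
  -- supported at `r'`.
  have hr : (dickson θ b).mulVec w r = 0 := by
    have h2 : dotProduct u ((dickson θ b).mulVec
        fun i => (θ ^ ((r' - r : Fin (m + 1)) : ℕ)) (w (i - (r' - r)))) = 0 := by
      rw [Matrix.dotProduct_mulVec, huM, zero_dotProduct]
    rw [dotProduct, Finset.sum_eq_single r'] at h2
    · rw [dickson_mulVec_shift hθ, sub_sub_cancel] at h2
      exact (map_eq_zero _).1 ((mul_eq_zero.1 h2).resolve_left hr')
    · intro i _ hi
      rw [dickson_mulVec_shift hθ, h, map_zero, mul_zero]
      intro h3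
      apply hi
      rw [sub_eq_iff_eq_add] at h3
      rw [h3, add_sub_cancel]
    · simp
  have hMw : (dickson θ b).mulVec w = 0 := by
    ext i
    by_cases hi : i = r
    · rw [hi, hr]; rfl
    · exact h i hi
  apply hw
  ext i
  rw [const_of_mulVec_eq_zero hθ hinj hker w hMw i c, hc]; rfl

lemma fixed_of_minor_ne_zero (hm : 1 ≤ m) (hθ : θ ^ (m + 1) = 1) (hb : ∑ i, b i = 0)
    (r c : Fin (m + 1))
    (hdet : (Matrix.of fun i j : Fin m =>
      dickson θ b (r.succAbove i) (c.succAbove j)).det ≠ 0)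
    (y : K) (hy : ∑ i, b i * (θ ^ (i : ℕ)) y = 0) : θ y = y := by
  by_contra hne
  apply hdet
  rw [minor_eq_zero_iff]
  refine ⟨fun i => (θ ^ (i : ℕ)) y - (θ ^ (c : ℕ)) y, ?_, sub_self _, ?_⟩
  · intro h0
    apply hne
    have h1 := congrFun h0 (c + 1)
    have hv1 : ((1 : Fin (m + 1)) : ℕ) = 1 := by
      rw [Fin.val_one']; exact Nat.mod_eq_of_lt (by omega)
    simp only [Pi.zero_apply] at h1
    rw [pow_add_val hθ, sub_eq_zero, hv1, pow_one] at h1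
    exact (θ ^ (c : ℕ)).injective h1
  · intro i _
    have hsplit : (fun i : Fin (m + 1) => (θ ^ (i : ℕ)) y - (θ ^ (c : ℕ)) y) =
        (fun i : Fin (m + 1) => (θ ^ (i : ℕ)) y) - (θ ^ (c : ℕ)) y • fun _ => (1 : K) := by
      funext i
      rw [Pi.sub_apply, Pi.smul_apply, smul_eq_mul, mul_one]
    rw [hsplit, Matrix.mulVec_sub, Matrix.mulVec_smul, mulVec_one_eq_zero hθ hb, Pi.sub_apply,
      dickson_mulVec_orbit hθ, hy]
    simp

end dickson

/-! ### Powers of Frobenius on a finite field -/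

section Frobenius

lemma pow_iterate_eq {K : Type*} [Field K] (q k : ℕ) (x : K) :
    (fun y : K => y ^ q)^[k] x = x ^ q ^ k := by
  rw [pow_iterate]

lemma pow_gcd_fixed {K : Type*} [Field K] {q i j : ℕ} {x : K}
    (hi : x ^ q ^ i = x) (hj : x ^ q ^ j = x) : x ^ q ^ (Nat.gcd i j) = x := by
  rw [← pow_iterate_eq] at hi hj ⊢
  exact Function.IsPeriodicPt.gcd (f := fun y : K => y ^ q) hi hj

/-- A power `x ↦ x ^ q ^ d` with `0 < d < n` is not the identity on a field with `q ^ n` elements: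
test it on a generator of the unit group. -/
lemma exists_pow_ne {K : Type*} [Field K] [Fintype K] {q n d : ℕ} (hq : 2 ≤ q)
    (hK : Fintype.card K = q ^ n) (hd : 0 < d) (hdn : d < n) : ∃ x : K, x ^ q ^ d ≠ x := by
  classical
  by_contra! h
  obtain ⟨u, hu⟩ := IsCyclic.exists_generator (α := Kˣ)
  have hord : orderOf u = q ^ n - 1 := by
    rw [orderOf_eq_card_of_forall_mem_zpowers hu, Nat.card_eq_fintype_card, Fintype.card_units, hK]
  have h1 : u ^ (q ^ d - 1) = 1 := by
    have h2 : u ^ (q ^ d) = u := by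
      ext; simpa using h u
    have h3 : q ^ d = (q ^ d - 1) + 1 := by
      have := Nat.one_le_pow d q (by omega)
      omega
    rw [h3, pow_succ] at h2
    simpa using h2
  have h4 : q ^ d < q ^ n := Nat.pow_lt_pow_right (by omega) hdn
  have h5 : 2 ≤ q ^ d := hq.trans (Nat.le_self_pow hd.ne' q)
  have h6 := orderOf_dvd_of_pow_eq_one h1
  rw [hord] at h6
  have := Nat.le_of_dvd (by omega) h6
  omega

lemma exists_frobenius {K : Type*} [Field K] [Fintype K] {q n : ℕ} (s : ℕ) (hq : IsPrimePow q)
    (hK : Fintype.card K = q ^ n) : ∃ θ : K →+* K, ∀ x, θ x = x ^ (q ^ s) := by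
  obtain ⟨p, k, hp, _, rfl⟩ := hq
  have hp := hp.nat_prime
  have : Fact p.Prime := ⟨hp⟩
  have : CharP K p := charP_of_card_eq_prime_pow (f := k * n) (by
    rw [hK, pow_mul])
  exact ⟨iterateFrobenius K p (k * s), fun x => by rw [iterateFrobenius_def, pow_mul]⟩

end Frobenius

/-! ### The equivalence -/

/-- Let `f(x) = ∑_{i=1}^{n-1} a_i x^(σ^i)` and, for each `x`, let `M x` be
the σ-Dickson matrix of the coefficients `b₀ = -f(x)`, `b_i = a_i x^(σ^i)`.
Then: (i) `f` is scattered; (ii) for every nonzero `x` some `(n-1)`-order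
minor of `M x` is nonzero; (iii) for every nonzero `x` every `(n-1)`-order
minor of `M x` is nonzero — are equivalent. -/
theorem stmt_9 (q n s : ℕ) (hq : IsPrimePow q) (hn : 3 ≤ n) (hs : 0 < s)
    (hsn : Nat.Coprime s n) (K : Type*) [Field K] [Fintype K]
    (hK : Fintype.card K = q ^ n)
    (a : ℕ → K) (f : K → K)
    (hf : ∀ x, f x = ∑ i ∈ Finset.Icc 1 (n - 1), a i * x ^ ((q ^ s) ^ i))
    (M : K → Matrix (Fin n) (Fin n) K)
    (hM : ∀ x, ∀ r c : Fin n, M x r c =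
      (if (((c : ℕ) + n - (r : ℕ)) % n) = 0 then -f x
        else a ((((c : ℕ) + n - (r : ℕ)) % n)) *
          x ^ ((q ^ s) ^ (((c : ℕ) + n - (r : ℕ)) % n))) ^ ((q ^ s) ^ (r : ℕ))) :
    ∀ h1 : n - 1 + 1 = n,
    ((∀ x t : K, x ≠ 0 → t ≠ 0 → x * f t = t * f x →
        ∃ c : K, c ^ q = c ∧ x = c * t) ↔
      (∀ x : K, x ≠ 0 → ∃ r c : Fin n,
        (Matrix.of fun i j : Fin (n - 1) =>
          M x (Fin.cast h1 ((Fin.cast h1.symm r).succAbove i))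
            (Fin.cast h1 ((Fin.cast h1.symm c).succAbove j))).det ≠ 0)) ∧
    ((∀ x : K, x ≠ 0 → ∃ r c : Fin n,
        (Matrix.of fun i j : Fin (n - 1) =>
          M x (Fin.cast h1 ((Fin.cast h1.symm r).succAbove i))
            (Fin.cast h1 ((Fin.cast h1.symm c).succAbove j))).det ≠ 0) ↔
      (∀ x : K, x ≠ 0 → ∀ r c : Fin n,
        (Matrix.of fun i j : Fin (n - 1) =>
          M x (Fin.cast h1 ((Fin.cast h1.symm r).succAbove i))
            (Fin.cast h1 ((Fin.cast h1.symm c).succAbove j))).det ≠ 0)) := by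
  have hq2 : 2 ≤ q := hq.two_le
  obtain ⟨θ, hθ⟩ := exists_frobenius s hq hK
  have hθpow : ∀ (k : ℕ) (x : K), (θ ^ k) x = x ^ ((q ^ s) ^ k) := by
    intro k x
    have hfun : (θ : K → K) = fun y => y ^ (q ^ s) := funext hθ
    rw [RingHom.coe_pow, hfun, pow_iterate_eq]
  have hcard : ∀ x : K, x ^ q ^ n = x := fun x => by rw [← hK, FiniteField.pow_card]
  have hfixed : ∀ x : K, θ x = x ↔ x ^ q = x := by
    intro x
    constructor
    · intro h
      rw [hθ] at h
      have := pow_gcd_fixed h (hcard x)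
      rwa [hsn, pow_one] at this
    · intro h
      rw [hθ, ← pow_iterate_eq]
      exact Function.iterate_fixed (f := fun y : K => y ^ q) h s
  obtain ⟨m, rfl⟩ : ∃ m, n = m + 1 := ⟨n - 1, by omega⟩
  have hθn : θ ^ (m + 1) = 1 := by
    ext x
    rw [hθpow, ← pow_mul, mul_comm, pow_mul, ← pow_iterate_eq]
    exact Function.iterate_fixed (f := fun y : K => y ^ (q ^ (m + 1))) (hcard x) s
  have hne : ∀ i j : ℕ, i < j → j < m + 1 → θ ^ i ≠ θ ^ j := by
    intro i j hij hj h
    have hg : Nat.gcd (s * (j - i)) (m + 1) = Nat.gcd (j - i) (m + 1) :=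
      Nat.Coprime.gcd_mul_left_cancel _ hsn
    have hlt : Nat.gcd (j - i) (m + 1) < m + 1 :=
      (Nat.gcd_le_left _ (by omega)).trans_lt (by omega)
    obtain ⟨x, hx⟩ := exists_pow_ne hq2 hK (Nat.gcd_pos_of_pos_right _ (by omega)) hlt
    apply hx
    rw [← hg]
    refine pow_gcd_fixed ?_ (hcard x)
    rw [pow_mul, ← hθpow]
    apply (θ ^ i).injective
    rw [← pow_add_apply, Nat.add_sub_cancel' hij.le, h]
  have hinj : Function.Injective fun j : Fin (m + 1) => θ ^ (j : ℕ) := by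
    intro i j hij
    rcases lt_trichotomy (i : ℕ) j with h | h | h
    · exact absurd hij (hne _ _ h j.2)
    · exact Fin.ext h
    · exact absurd hij.symm (hne _ _ h i.2)
  let b : K → Fin (m + 1) → K := fun x i =>
    if (i : ℕ) = 0 then -f x else a i * x ^ ((q ^ s) ^ (i : ℕ))
  have hMb : ∀ x, M x = dickson θ (b x) := by
    intro x
    ext r c
    have hidx : ((c - r : Fin (m + 1)) : ℕ) = ((c : ℕ) + (m + 1) - (r : ℕ)) % (m + 1) := by
      rw [Fin.val_sub]
      congr 1
      omega
    rw [hM, dickson, hθpow]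
    simp only [b, hidx]
  have hf' : ∀ x, f x = ∑ i : Fin m, a (i + 1) * x ^ ((q ^ s) ^ ((i : ℕ) + 1)) := by
    intro x
    rw [hf, Fin.sum_univ_eq_sum_range fun i => a (i + 1) * x ^ ((q ^ s) ^ (i + 1)),
      Finset.range_eq_Ico, Finset.sum_Ico_add' (fun i => a i * x ^ ((q ^ s) ^ i)) 0 m 1]
    rfl
  have hL : ∀ x y : K, ∑ i, b x i * (θ ^ (i : ℕ)) y = f (x * y) - y * f x := by
    intro x y
    rw [Fin.sum_univ_succ, hf' (x * y)]
    simp only [b, hθpow, Fin.val_zero, Fin.val_succ, mul_pow]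
    simp only [if_true, Nat.add_eq_zero_iff, one_ne_zero, and_false, if_false, pow_zero, pow_one,
      mul_assoc]
    ring
  have hb : ∀ x, ∑ i, b x i = 0 := by
    intro x
    simpa using hL x 1
  have hii : ∀ x : K, x ≠ 0 → (∃ r c : Fin (m + 1), (Matrix.of fun i j : Fin m =>
      M x (r.succAbove i) (c.succAbove j)).det ≠ 0) →
      ∀ y, f (x * y) - y * f x = 0 → θ y = y := by
    rintro x - ⟨r, c, h⟩ y hy
    rw [hMb] at h
    exact fixed_of_minor_ne_zero (by omega) hθn (hb x) r c h y (by rw [hL, hy])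
  have hiii : ∀ x : K, x ≠ 0 → (∀ y, f (x * y) - y * f x = 0 → θ y = y) →
      ∀ r c : Fin (m + 1), (Matrix.of fun i j : Fin m =>
        M x (r.succAbove i) (c.succAbove j)).det ≠ 0 := by
    intro x _ h r c
    rw [hMb]
    exact minor_ne_zero hθn hinj (hb x) (fun y hy => h y (by rw [← hL, hy])) r c
  have hscat : (∀ x t : K, x ≠ 0 → t ≠ 0 → x * f t = t * f x → ∃ c : K, c ^ q = c ∧ x = c * t) ↔
      ∀ x : K, x ≠ 0 → ∀ y, f (x * y) - y * f x = 0 → θ y = y := by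
    constructor
    · intro h x hx y hy
      by_cases hy0 : y = 0
      · rw [hy0, map_zero]
      obtain ⟨c, hc, hxc⟩ := h x (x * y) hx (mul_ne_zero hx hy0) (by
        rw [sub_eq_zero.1 hy]; ring)
      have hcy : c * y = 1 := by
        apply mul_left_cancel₀ hx
        rw [mul_one]
        calc x * (c * y) = c * (x * y) := by ring
          _ = x := hxc.symm
      have hθc := (hfixed c).2 hc
      rw [eq_inv_of_mul_eq_one_right hcy, map_inv₀, hθc]
    · intro h x t hx ht hxt
      refine ⟨x / t, (hfixed _).1 (h t ht _ ?_), by field_simp⟩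
      rw [mul_div_cancel₀ _ ht]
      field_simp
      rw [hxt]; ring
  intro h1
  -- Up to the definitional equality `m + 1 - 1 = m`, the index casts are the identity.
  change (_ ↔ (∀ x : K, x ≠ 0 → ∃ r c : Fin (m + 1), (Matrix.of fun i j : Fin m =>
      M x (r.succAbove i) (c.succAbove j)).det ≠ 0)) ∧
    ((∀ x : K, x ≠ 0 → ∃ r c : Fin (m + 1), (Matrix.of fun i j : Fin m =>
      M x (r.succAbove i) (c.succAbove j)).det ≠ 0) ↔
    (∀ x : K, x ≠ 0 → ∀ r c : Fin (m + 1), (Matrix.of fun i j : Fin m =>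
      M x (r.succAbove i) (c.succAbove j)).det ≠ 0))
  rw [hscat]
  exact ⟨⟨fun h x hx => ⟨0, 0, hiii x hx (h x hx) 0 0⟩, fun h x hx => hii x hx (h x hx)⟩,
    fun h x hx => hiii x hx (hii x hx (h x hx)), fun h x hx => ⟨0, 0, h x hx 0 0⟩⟩
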